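/- arXiv:1706.01281 — 2 statements merged into one kernel-verified Lean document; each statement's English description precedes it below -/
import Mathlib

section
/- Let N ≥ 1, d ≥ 2, let Ω ⊆ ℝ^N be an open set, let n₀ : Ω → S^{d-1} be a Lebesgue-measurable map, and let (ρ_k) be a sequence of mollifiers. Then there exists a Lebesgue-measurable map n : Ω → S^{d-1} with n(x) ∈ {n₀(x), −n₀(x)} for a.e. x ∈ Ω, such that liminf_{k→∞} ∬_{Ω×Ω} ‖n(x) − n(y)‖_{ℝ^d} / |x−y| · ρ_k(|x−y|) dx dy ≤ (1 + 2/π) · liminf_{k→∞} ∬_{Ω×Ω} (1/√2)·‖n₀(x)⊗n₀(x) − n₀(y)⊗n₀(y)‖ / |x−y| · ρ_k(|x−y|) dx dy, where all double integrals are Lebesgue integrals with values in [0,∞]. -/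
/-!
STATEMENT 1: Euclidean BV-lifting estimate (measurable/mollified formulation) with the
optimal constant 1 + 2/π, for the physical (tensorial) isometric embedding
`[n] ↦ (1/√2) n ⊗ n` of `ℝP^{d-1}` into the space of `d × d` matrices.
-/

noncomputable section
open MeasureTheory Real Filter
open scoped ENNReal RealInnerProductSpace

/-- The Frobenius (Euclidean) norm of a `d × d` real matrix. -/
def frobNorm {d : ℕ} (A : Fin d → Fin d → ℝ) : ℝ := Real.sqrt (∑ i, ∑ j, (A i j) ^ 2)

/-- The tensor (outer) product `v ⊗ w` of two vectors, as a `d × d` matrix. -/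
def outer {d : ℕ} (v w : EuclideanSpace ℝ (Fin d)) : Fin d → Fin d → ℝ := fun i j => v i * w j

theorem aux_trig {t : ℝ} (h0 : 0 ≤ t) (h1 : t ≤ π / 2) : t ^ 2 * cos t ≤ sin t ^ 2 := by
  set s := t / 2 with hs
  have ht : t = 2 * s := by rw [hs]; ring
  have hpi := Real.pi_pos
  have hs0 : 0 ≤ s := by positivity
  have hc : 0 < cos s := Real.cos_pos_of_mem_Ioo ⟨by linarith, by linarith⟩
  have h2 : s * cos s ≤ sin s := by
    have := Real.le_tan hs0 (by linarith)
    rw [Real.tan_eq_sin_div_cos, le_div_iff₀ hc] at this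
    exact this
  have h3 : (s * cos s) ^ 2 ≤ sin s ^ 2 := by
    apply pow_le_pow_left₀ (by positivity) h2
  rw [ht, Real.sin_two_mul, Real.cos_two_mul]
  have h4 : sin s ^ 2 = 1 - cos s ^ 2 := by rw [← Real.sin_sq_add_cos_sq s]; ring
  have h5 := mul_le_mul_of_nonneg_right h3 (sq_nonneg (cos s))
  have h6 : 0 ≤ s ^ 2 * (1 - cos s ^ 2) ^ 2 := by positivity
  nlinarith

theorem aux_chord {t : ℝ} (h0 : 0 ≤ t) (h1 : t ≤ π / 2) :
    t ≤ sin t * (1 + (1 - 2 / π) * t) := by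
  rcases h0.eq_or_lt with rfl | h0
  · simp
  have hpi := Real.pi_pos
  have hsin : ∀ x ∈ Set.Ioc 0 (π / 2), 0 < sin x := fun x hx =>
    Real.sin_pos_of_pos_of_lt_pi hx.1 (by linarith [hx.2])
  have hder : ∀ x ∈ Set.Ioc 0 (π / 2),
      HasDerivAt (fun x => (sin x)⁻¹ - x⁻¹) (-cos x / sin x ^ 2 - (-(x ^ 2)⁻¹)) x := fun x hx =>
    ((Real.hasDerivAt_sin x).inv (hsin x hx).ne').sub (hasDerivAt_inv hx.1.ne')
  have hmono : MonotoneOn (fun x => (sin x)⁻¹ - x⁻¹) (Set.Ioc 0 (π / 2)) := by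
    apply monotoneOn_of_deriv_nonneg (convex_Ioc _ _)
    · exact fun x hx => (hder x hx).continuousAt.continuousWithinAt
    · intro x hx
      exact (hder x (interior_subset hx)).differentiableAt.differentiableWithinAt
    · intro x hx
      have hx := interior_subset hx
      rw [(hder x hx).deriv]
      have h := aux_trig hx.1.le hx.2
      have h2 := hsin x hx
      have h3 := hx.1
      have : cos x / sin x ^ 2 ≤ (x ^ 2)⁻¹ := by
        rw [div_le_iff₀ (by positivity), ← div_eq_inv_mul, le_div_iff₀ (by positivity)]
        linarith
      rw [neg_div]; linarith
  have h := hmono ⟨h0, h1⟩ (⟨by positivity, le_rfl⟩ : π / 2 ∈ Set.Ioc 0 (π / 2)) h1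
  simp only [Real.sin_pi_div_two, inv_div, inv_one] at h
  have hs := hsin t ⟨h0, h1⟩
  have h2 := mul_le_mul_of_nonneg_left h (mul_pos hs h0).le
  have e : sin t * t * ((sin t)⁻¹ - t⁻¹) = t - sin t := by field_simp
  rw [e] at h2
  linarith

theorem aux_final {θ : ℝ} (h0 : 0 ≤ θ) (h1 : θ ≤ π) :
    (1 - θ / π) * (2 * sin (θ / 2)) + θ / π * (2 * cos (θ / 2)) ≤ (1 + 2 / π) * sin θ := by
  set t := θ / 2 with hs
  have ht : θ = 2 * t := by rw [hs]; ring
  have hpi := Real.pi_pos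
  have ht0 : 0 ≤ t := by positivity
  have A := aux_chord ht0 (by linarith)
  have B := aux_chord (t := π / 2 - t) (by linarith) (by linarith)
  rw [Real.sin_pi_div_two_sub] at B
  have hs : 0 ≤ sin t := Real.sin_nonneg_of_nonneg_of_le_pi ht0 (by linarith)
  have hc : 0 ≤ cos t := Real.cos_nonneg_of_mem_Icc ⟨by linarith, by linarith⟩
  have A' := mul_le_mul_of_nonneg_right A hc
  have B' := mul_le_mul_of_nonneg_right B hs
  have C := mul_le_mul_of_nonneg_left (add_le_add A' B') (by positivity : 0 ≤ 4 / π)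
  rw [ht, Real.sin_two_mul]
  refine le_trans (le_of_eq ?_) (C.trans (le_of_eq ?_))
  · field_simp; ring
  · field_simp; ring

/-! ### Probability that two signs differ -/

def Dset {E : Type*} [NormedAddCommGroup E] [InnerProductSpace ℝ E] (a b : E) : Set E :=
  {e | ¬ (0 ≤ ⟪a, e⟫ ↔ 0 ≤ ⟪b, e⟫)}

section
variable {E : Type*} [NormedAddCommGroup E] [InnerProductSpace ℝ E] [MeasurableSpace E]
  [BorelSpace E]

theorem measurableSet_half (a : E) : MeasurableSet {e : E | 0 ≤ ⟪a, e⟫} :=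
  (isClosed_le continuous_const (by fun_prop)).measurableSet

theorem measurableSet_Dset (a b : E) : MeasurableSet (Dset a b) :=
  ((measurableSet_half a).iff (measurableSet_half b)).compl

variable (μ : Measure E) [IsProbabilityMeasure μ]

theorem D_inv
    (hinv : ∀ T : E ≃ₗᵢ[ℝ] E, MeasurePreserving T μ μ)
    (T : E ≃ₗᵢ[ℝ] E) (a b : E) : μ.real (Dset (T a) (T b)) = μ.real (Dset a b) := by
  have : Dset a b = T ⁻¹' (Dset (T a) (T b)) := by
    ext e; simp [Dset]
  rw [this, (hinv T).measureReal_preimage (measurableSet_Dset _ _).nullMeasurableSet]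

theorem D_neg
    (hnull : ∀ a : E, a ≠ 0 → μ {e | ⟪a, e⟫ = 0} = 0)
    (a b : E) (hb : b ≠ 0) : μ.real (Dset a (-b)) = 1 - μ.real (Dset a b) := by
  rw [← probReal_compl_eq_one_sub (measurableSet_Dset _ _)]
  apply measureReal_congr
  have h : ∀ᵐ e ∂μ, ⟪b, e⟫ ≠ 0 := by
    rw [ae_iff]; simpa using hnull b hb
  filter_upwards [h] with e he
  apply propext
  change (¬ (0 ≤ ⟪a, e⟫ ↔ 0 ≤ ⟪-b, e⟫)) ↔ ¬ ¬ (0 ≤ ⟪a, e⟫ ↔ 0 ≤ ⟪b, e⟫)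
  rw [inner_neg_left]
  have : (0 ≤ -⟪b, e⟫) ↔ ¬ (0 ≤ ⟪b, e⟫) := by
    rw [not_le]
    constructor
    · intro h; exact lt_of_le_of_ne (by linarith) he
    · intro h; linarith
  rw [this]; tauto

theorem D_double
    (hinv : ∀ T : E ≃ₗᵢ[ℝ] E, MeasurePreserving T μ μ)
    (a b : E) (hb : ‖b‖ = 1) (hab : 0 < ⟪a, b⟫) :
    μ.real (Dset a ((2 * ⟪a, b⟫) • b - a)) = 2 * μ.real (Dset a b) := by
  set c := (2 * ⟪a, b⟫) • b - a with hc
  have hT : μ.real (Dset c b) = μ.real (Dset a b) := by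
    have := D_inv μ hinv (Submodule.reflection (Submodule.span ℝ {b})) a b
    rw [Submodule.reflection_singleton_apply, Submodule.reflection_mem_subspace_eq_self
      (Submodule.mem_span_singleton_self b)] at this
    rw [← this, hc]
    congr 3
    simp [hb, real_inner_comm, mul_smul, two_smul]
  have hsum : Dset a c = Dset a b ∪ Dset c b := by
    ext e
    have : ⟪a, e⟫ + ⟪c, e⟫ = 2 * ⟪a, b⟫ * ⟪b, e⟫ := by
      rw [hc, inner_sub_left, real_inner_smul_left]; ring
    simp only [Dset, Set.mem_ofPred_eq, Set.mem_union]
    have h1 : 0 ≤ ⟪a, e⟫ → 0 ≤ ⟪c, e⟫ → 0 ≤ ⟪b, e⟫ := by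
      intro h h'
      by_contra! h3
      nlinarith [mul_neg_of_pos_of_neg hab h3]
    have h2 : ¬ 0 ≤ ⟪a, e⟫ → ¬ 0 ≤ ⟪c, e⟫ → ¬ 0 ≤ ⟪b, e⟫ := by
      intro h h' h3
      push Not at h h'
      nlinarith [mul_nonneg hab.le h3]
    tauto
  have hdisj : Disjoint (Dset a b) (Dset c b) := by
    rw [Set.disjoint_left]
    intro e
    have : ⟪a, e⟫ + ⟪c, e⟫ = 2 * ⟪a, b⟫ * ⟪b, e⟫ := by
      rw [hc, inner_sub_left, real_inner_smul_left]; ring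
    simp only [Dset, Set.mem_ofPred_eq]
    have h1 : 0 ≤ ⟪a, e⟫ → 0 ≤ ⟪c, e⟫ → 0 ≤ ⟪b, e⟫ := by
      intro h h'
      by_contra! h3
      nlinarith [mul_neg_of_pos_of_neg hab h3]
    have h2 : ¬ 0 ≤ ⟪a, e⟫ → ¬ 0 ≤ ⟪c, e⟫ → ¬ 0 ≤ ⟪b, e⟫ := by
      intro h h' h3
      push Not at h h'
      nlinarith [mul_nonneg hab.le h3]
    tauto
  rw [hsum, measureReal_union hdisj (measurableSet_Dset _ _), hT]; ring

theorem D_bound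
    (hinv : ∀ T : E ≃ₗᵢ[ℝ] E, MeasurePreserving T μ μ)
    (hnull : ∀ a : E, a ≠ 0 → μ {e | ⟪a, e⟫ = 0} = 0)
    (n : ℕ) : ∀ a b : E, ‖a‖ = 1 → ‖b‖ = 1 →
    |μ.real (Dset a b) - arccos ⟪a, b⟫ / π| ≤ (1 / 2) ^ n := by
  have hpi := Real.pi_pos
  induction n with
  | zero =>
    intro a b _ _
    have h1 : μ.real (Dset a b) ≤ 1 := measureReal_le_one
    have h2 : 0 ≤ μ.real (Dset a b) := measureReal_nonneg
    have h3 : arccos ⟪a, b⟫ / π ≤ 1 := (div_le_one hpi).2 (arccos_le_pi _)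
    have h4 : 0 ≤ arccos ⟪a, b⟫ / π := div_nonneg (arccos_nonneg _) hpi.le
    rw [abs_le]; constructor <;> simp <;> linarith
  | succ n ih =>
    have pos : ∀ a b : E, ‖a‖ = 1 → ‖b‖ = 1 → 0 < ⟪a, b⟫ →
        |μ.real (Dset a b) - arccos ⟪a, b⟫ / π| ≤ (1 / 2) ^ (n + 1) := by
      intro a b ha hb hab
      have haa : ⟪a, a⟫ = 1 := by rw [real_inner_self_eq_norm_sq, ha]; norm_num
      have hbb : ⟪b, b⟫ = 1 := by rw [real_inner_self_eq_norm_sq, hb]; norm_num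
      have h := D_double μ hinv a b hb hab
      have hcn : ‖(2 * ⟪a, b⟫) • b - a‖ = 1 := by
        have : ‖(2 * ⟪a, b⟫) • b - a‖ ^ 2 = 1 := by
          rw [← real_inner_self_eq_norm_sq]
          simp only [inner_sub_left, inner_sub_right, real_inner_smul_left, real_inner_smul_right,
            haa, hbb, real_inner_comm a b]
          ring
        nlinarith [norm_nonneg ((2 * ⟪a, b⟫) • b - a)]
      have ih' := ih a _ ha hcn
      have hang : arccos ⟪a, (2 * ⟪a, b⟫) • b - a⟫ = 2 * arccos ⟪a, b⟫ := by
        have hle : ⟪a, b⟫ ≤ 1 := by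
          have := real_inner_le_norm a b; rwa [ha, hb, one_mul] at this
        have : ⟪a, (2 * ⟪a, b⟫) • b - a⟫ = cos (2 * arccos ⟪a, b⟫) := by
          rw [Real.cos_two_mul, Real.cos_arccos (by linarith) hle]
          simp only [inner_sub_right, real_inner_smul_right, haa]
          ring
        rw [this, Real.arccos_cos]
        · linarith [arccos_nonneg ⟪a, b⟫]
        · linarith [(Real.arccos_le_pi_div_two (x := ⟪a, b⟫)).2 hab.le]
      rw [h, hang, abs_le] at ih'
      have e : 2 * arccos ⟪a, b⟫ / π = 2 * (arccos ⟪a, b⟫ / π) := by ring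
      rw [e] at ih'
      rw [pow_succ, abs_le]
      constructor <;> linarith [ih'.1, ih'.2]
    intro a b ha hb
    have hb0 : b ≠ 0 := by rintro rfl; simp at hb
    have hneg := D_neg μ hnull a b hb0
    rcases lt_trichotomy ⟪a, b⟫ 0 with hab | hab | hab
    · have h := pos a (-b) ha (by simpa using hb) (by simpa using hab)
      rw [hneg, inner_neg_right, arccos_neg] at h
      rw [← abs_neg]
      convert h using 2
      field_simp; ring
    · have := D_inv μ hinv (Submodule.reflection (Submodule.span ℝ {a})) a b
      rw [Submodule.reflection_mem_subspace_eq_self (Submodule.mem_span_singleton_self a),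
        Submodule.reflection_singleton_apply] at this
      have e : (2 • (⟪a, b⟫ / ((‖a‖ : ℝ) ^ 2)) • a - b) = -b := by simp [hab]
      simp only [RCLike.ofReal_real_eq_id, id_eq] at this
      rw [e, hneg] at this
      have : μ.real (Dset a b) = 1 / 2 := by linarith
      rw [this, hab, arccos_zero]
      have : (1 : ℝ) / 2 - π / 2 / π = 0 := by field_simp; ring
      rw [this]; simp
    · exact pos a b ha hb hab

theorem D_eq
    (hinv : ∀ T : E ≃ₗᵢ[ℝ] E, MeasurePreserving T μ μ)
    (hnull : ∀ a : E, a ≠ 0 → μ {e | ⟪a, e⟫ = 0} = 0)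
    (a b : E) (ha : ‖a‖ = 1) (hb : ‖b‖ = 1) :
    μ.real (Dset a b) = arccos ⟪a, b⟫ / π := by
  have h : |μ.real (Dset a b) - arccos ⟪a, b⟫ / π| ≤ 0 :=
    ge_of_tendsto' (tendsto_pow_atTop_nhds_zero_of_lt_one (by norm_num) (by norm_num))
      (fun n => D_bound μ hinv hnull n a b ha hb)
  have := abs_nonpos_iff.1 h
  linarith

def lift0 (e v : E) : E := open Classical in if 0 ≤ ⟪v, e⟫ then v else -v

theorem expect
    (hinv : ∀ T : E ≃ₗᵢ[ℝ] E, MeasurePreserving T μ μ)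
    (hnull : ∀ a : E, a ≠ 0 → μ {e | ⟪a, e⟫ = 0} = 0)
    (a b : E) (ha : ‖a‖ = 1) (hb : ‖b‖ = 1) :
    ∫⁻ e, ENNReal.ofReal ‖lift0 e a - lift0 e b‖ ∂μ ≤
      ENNReal.ofReal ((1 + 2 / π) * sqrt (1 - ⟪a, b⟫ ^ 2)) := by
  have hpi := Real.pi_pos
  have hle : ⟪a, b⟫ ≤ 1 := by
    have := real_inner_le_norm a b; rwa [ha, hb, one_mul] at this
  have hge : -1 ≤ ⟪a, b⟫ := by
    have := neg_le_of_abs_le (abs_real_inner_le_norm a b); rwa [ha, hb, one_mul] at this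
  have key : ∀ e, ENNReal.ofReal ‖lift0 e a - lift0 e b‖ =
      (Dset a b)ᶜ.indicator (fun _ => ENNReal.ofReal ‖a - b‖) e +
      (Dset a b).indicator (fun _ => ENNReal.ofReal ‖a + b‖) e := by
    intro e
    by_cases h1 : 0 ≤ ⟪a, e⟫ <;> by_cases h2 : 0 ≤ ⟪b, e⟫
    · simp [lift0, Dset, h1, h2]
    · simp [lift0, Dset, h1, h2]
    · have : -a - b = -(a + b) := by abel
      simp [lift0, Dset, h1, h2, this, -neg_add_rev, norm_neg]
    · have : -a + b = -(a - b) := by abel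
      simp [lift0, Dset, h1, h2, this, -neg_sub, norm_neg]
  simp_rw [key]
  have hm := measurableSet_Dset a b
  rw [lintegral_add_left (measurable_const.indicator hm.compl), lintegral_indicator hm.compl,
    lintegral_indicator hm, setLIntegral_const, setLIntegral_const,
    ← ofReal_measureReal, ← ofReal_measureReal, probReal_compl_eq_one_sub hm,
    D_eq μ hinv hnull a b ha hb, ← ENNReal.ofReal_mul (norm_nonneg _),
    ← ENNReal.ofReal_mul (norm_nonneg _)]
  set θ := arccos ⟪a, b⟫ with hθ
  have h0 : 0 ≤ θ := arccos_nonneg _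
  have h1 : θ ≤ π := arccos_le_pi _
  have hcos : ⟪a, b⟫ = cos θ := (cos_arccos hge hle).symm
  have hd : θ / π ≤ 1 := (div_le_one hpi).2 h1
  have hs : 0 ≤ sin (θ / 2) := Real.sin_nonneg_of_nonneg_of_le_pi (by linarith) (by linarith)
  have hc : 0 ≤ cos (θ / 2) := Real.cos_nonneg_of_mem_Icc ⟨by linarith, by linarith⟩
  have h2 : cos θ = 2 * cos (θ / 2) ^ 2 - 1 := by rw [← Real.cos_two_mul]; ring_nf
  have hsc := Real.sin_sq_add_cos_sq (θ / 2)
  have hsub : ‖a - b‖ = 2 * sin (θ / 2) := by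
    rw [← sq_eq_sq₀ (norm_nonneg _) (by positivity), norm_sub_sq_real, ha, hb, hcos, h2]
    nlinarith
  have hadd : ‖a + b‖ = 2 * cos (θ / 2) := by
    rw [← sq_eq_sq₀ (norm_nonneg _) (by positivity), norm_add_sq_real, ha, hb, hcos, h2]
    nlinarith
  have hsq : sqrt (1 - ⟪a, b⟫ ^ 2) = sin θ := by rw [hθ, sin_arccos]
  rw [← ENNReal.ofReal_add (mul_nonneg (norm_nonneg _) (by linarith)) (by positivity), hsub, hadd,
    hsq]
  apply ENNReal.ofReal_le_ofReal
  linarith [aux_final h0 h1]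
end

theorem exists_measure (d : ℕ) : ∃ μ : Measure (EuclideanSpace ℝ (Fin d)),
    IsProbabilityMeasure μ ∧
    (∀ T : EuclideanSpace ℝ (Fin d) ≃ₗᵢ[ℝ] EuclideanSpace ℝ (Fin d), MeasurePreserving T μ μ) ∧
    (∀ a : EuclideanSpace ℝ (Fin d), a ≠ 0 → μ {e | ⟪a, e⟫ = 0} = 0) := by
  refine ⟨ProbabilityTheory.cond volume (Metric.ball 0 1), ?_, ?_, ?_⟩
  · apply ProbabilityTheory.cond_isProbabilityMeasure_of_finite
    · exact (Metric.measure_ball_pos _ _ one_pos).ne'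
    · exact measure_ball_lt_top.ne
  · intro T
    unfold ProbabilityTheory.cond
    apply MeasurePreserving.smul_measure
    have := T.measurePreserving.restrict_preimage (s := Metric.ball 0 1) measurableSet_ball
    rwa [LinearIsometryEquiv.preimage_ball, map_zero] at this
  · intro a ha
    refine ProbabilityTheory.cond_absolutelyContinuous ?_
    have : {e | ⟪a, e⟫ = 0} = ((LinearMap.ker (innerₛₗ ℝ a) : Submodule ℝ (EuclideanSpace ℝ (Fin d))) : Set _) := by
      ext e; simp
    rw [this]
    apply Measure.addHaar_submodule
    intro h
    have : a ∈ LinearMap.ker (innerₛₗ ℝ a) := by rw [h]; trivial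
    simp at this
    exact ha this

theorem frob_eq {d : ℕ} (a b : EuclideanSpace ℝ (Fin d)) (ha : ‖a‖ = 1) (hb : ‖b‖ = 1) :
    1 / sqrt 2 * frobNorm (outer a a - outer b b) = sqrt (1 - ⟪a, b⟫ ^ 2) := by
  have e : ∑ i, ∑ j, ((outer a a - outer b b) i j) ^ 2 = 2 * (1 - ⟪a, b⟫ ^ 2) := by
    have haa : ∑ i, a i * a i = 1 := by
      have := EuclideanSpace.real_norm_sq_eq a
      rw [ha] at this; simp only [pow_two] at this; linarith
    have hbb : ∑ i, b i * b i = 1 := by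
      have := EuclideanSpace.real_norm_sq_eq b
      rw [hb] at this; simp only [pow_two] at this; linarith
    have hab : ⟪a, b⟫ = ∑ i, a i * b i := by
      rw [PiLp.inner_apply]; simp [mul_comm]
    have : ∀ i j, ((outer a a - outer b b) i j) ^ 2 = (a i * a i) * (a j * a j)
        + (b i * b i) * (b j * b j) - 2 * ((a i * b i) * (a j * b j)) := by
      intro i j; simp only [outer, Pi.sub_apply]; ring
    simp_rw [this, Finset.sum_sub_distrib, Finset.sum_add_distrib, ← Finset.mul_sum,
      ← Finset.sum_mul, haa, hbb, ← hab]
    ring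
  rw [frobNorm, e, sqrt_mul (by norm_num), ← mul_assoc]
  have : sqrt (2 : ℝ) ≠ 0 := by positivity
  field_simp

theorem norm_lift0 {d : ℕ} (e v : EuclideanSpace ℝ (Fin d)) : ‖lift0 e v‖ = ‖v‖ := by
  unfold lift0; split_ifs <;> simp

theorem lift0_or {d : ℕ} (e v : EuclideanSpace ℝ (Fin d)) :
    lift0 e v = v ∨ lift0 e v = -v := by
  unfold lift0; split_ifs <;> simp

theorem measurable_lift0 {d : ℕ} :
    Measurable (fun p : EuclideanSpace ℝ (Fin d) × EuclideanSpace ℝ (Fin d) => lift0 p.1 p.2) := by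
  unfold lift0
  refine Measurable.ite ?_ measurable_snd measurable_snd.neg
  exact (isClosed_le continuous_const (by fun_prop)).measurableSet

theorem fubini_le {α β : Type*} [MeasurableSpace α] [MeasurableSpace β] (μ : Measure α)
    (ν : Measure β) [SFinite μ] [SFinite ν] (f : α → β → β → ℝ≥0∞) (g : β → β → ℝ≥0∞) (c : ℝ≥0∞)
    (hc : c ≠ ∞) (hf : Measurable (fun p : (α × β) × β => f p.1.1 p.1.2 p.2))
    (h : ∀ x y, ∫⁻ e, f e x y ∂μ ≤ c * g x y) :
    ∫⁻ e, ∫⁻ x, ∫⁻ y, f e x y ∂ν ∂ν ∂μ ≤ c * ∫⁻ x, ∫⁻ y, g x y ∂ν ∂ν := by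
  have hm2 : Measurable (fun p : α × β => ∫⁻ y, f p.1 p.2 y ∂ν) := hf.lintegral_prod_right'
  rw [lintegral_lintegral_swap (f := fun e x => ∫⁻ y, f e x y ∂ν) hm2.aemeasurable,
    ← lintegral_const_mul' c _ hc]
  refine lintegral_mono fun x => ?_
  have hmx : Measurable (fun p : α × β => f p.1 x p.2) :=
      hf.comp ((measurable_fst.prodMk measurable_const).prodMk measurable_snd)
  calc ∫⁻ e, ∫⁻ y, f e x y ∂ν ∂μ = ∫⁻ y, ∫⁻ e, f e x y ∂μ ∂ν :=
        lintegral_lintegral_swap (f := fun e y => f e x y) hmx.aemeasurable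
    _ ≤ ∫⁻ y, c * g x y ∂ν := lintegral_mono fun y => h x y
    _ = c * ∫⁻ y, g x y ∂ν := lintegral_const_mul' c _ hc

set_option maxHeartbeats 2000000 in
theorem euclidean_lifting_estimate
    (N d : ℕ) (hN : 1 ≤ N) (hd : 2 ≤ d)
    (Ω : Set (EuclideanSpace ℝ (Fin N))) (hΩ : IsOpen Ω)
    (n₀ : EuclideanSpace ℝ (Fin N) → EuclideanSpace ℝ (Fin d))
    (hn₀meas : Measurable n₀) (hn₀sph : ∀ x, ‖n₀ x‖ = 1)
    (ρ : ℕ → ℝ → ℝ) (hρmeas : ∀ k, Measurable (ρ k))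
    (hρnonneg : ∀ k, ∀ r > (0 : ℝ), 0 ≤ ρ k r)
    (hρint : ∀ k, ∫⁻ x : EuclideanSpace ℝ (Fin N), ENNReal.ofReal (ρ k ‖x‖) = 1)
    (hρconc : ∀ h > (0 : ℝ), Tendsto
      (fun k => ∫⁻ x in {x : EuclideanSpace ℝ (Fin N) | h < ‖x‖}, ENNReal.ofReal (ρ k ‖x‖))
      atTop (nhds 0)) :
    ∃ n : EuclideanSpace ℝ (Fin N) → EuclideanSpace ℝ (Fin d),
      Measurable n ∧ (∀ x, ‖n x‖ = 1) ∧
      (∀ᵐ x ∂(volume.restrict Ω), n x = n₀ x ∨ n x = -n₀ x) ∧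
      liminf (fun k => ∫⁻ x in Ω, ∫⁻ y in Ω,
          ENNReal.ofReal (‖n x - n y‖ / ‖x - y‖ * ρ k ‖x - y‖)) atTop ≤
      ENNReal.ofReal (1 + 2 / π) * liminf (fun k => ∫⁻ x in Ω, ∫⁻ y in Ω,
          ENNReal.ofReal ((1 / Real.sqrt 2) *
            frobNorm (outer (n₀ x) (n₀ x) - outer (n₀ y) (n₀ y)) / ‖x - y‖ * ρ k ‖x - y‖))
        atTop := by
  obtain ⟨μ, hprob, hinv, hnull⟩ := exists_measure d
  have hpi := Real.pi_pos
  let F : ℕ → EuclideanSpace ℝ (Fin d) → ℝ≥0∞ := fun k e => ∫⁻ x in Ω, ∫⁻ y in Ω,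
    ENNReal.ofReal (‖lift0 e (n₀ x) - lift0 e (n₀ y)‖ / ‖x - y‖ * ρ k ‖x - y‖)
  -- joint measurability
  have hm3 : ∀ k, Measurable (fun p : (EuclideanSpace ℝ (Fin d) × EuclideanSpace ℝ (Fin N)) ×
      EuclideanSpace ℝ (Fin N) => ENNReal.ofReal (‖lift0 p.1.1 (n₀ p.1.2) - lift0 p.1.1 (n₀ p.2)‖
        / ‖p.1.2 - p.2‖ * ρ k ‖p.1.2 - p.2‖)) := by
    intro k
    have h1 : Measurable (fun p : (EuclideanSpace ℝ (Fin d) × EuclideanSpace ℝ (Fin N)) ×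
      EuclideanSpace ℝ (Fin N) => lift0 p.1.1 (n₀ p.1.2)) :=
      measurable_lift0.comp ((measurable_fst.comp measurable_fst).prodMk
        (hn₀meas.comp (measurable_snd.comp measurable_fst)))
    have h2 : Measurable (fun p : (EuclideanSpace ℝ (Fin d) × EuclideanSpace ℝ (Fin N)) ×
      EuclideanSpace ℝ (Fin N) => lift0 p.1.1 (n₀ p.2)) :=
      measurable_lift0.comp ((measurable_fst.comp measurable_fst).prodMk
        (hn₀meas.comp measurable_snd))
    have h3 : Measurable (fun p : (EuclideanSpace ℝ (Fin d) × EuclideanSpace ℝ (Fin N)) ×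
      EuclideanSpace ℝ (Fin N) => ‖p.1.2 - p.2‖) := by fun_prop
    exact (((h1.sub h2).norm.div h3).mul ((hρmeas k).comp h3)).ennreal_ofReal
  have hm2 : ∀ k, Measurable (fun p : EuclideanSpace ℝ (Fin d) × EuclideanSpace ℝ (Fin N) =>
      ∫⁻ y in Ω, ENNReal.ofReal (‖lift0 p.1 (n₀ p.2) - lift0 p.1 (n₀ y)‖
        / ‖p.2 - y‖ * ρ k ‖p.2 - y‖)) := fun k => (hm3 k).lintegral_prod_right'
  have hFm : ∀ k, Measurable (F k) := fun k => (hm2 k).lintegral_prod_right'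
  have hmean : ∀ k, ∫⁻ e, F k e ∂μ ≤ ENNReal.ofReal (1 + 2 / π) * ∫⁻ x in Ω, ∫⁻ y in Ω,
          ENNReal.ofReal ((1 / Real.sqrt 2) *
            frobNorm (outer (n₀ x) (n₀ x) - outer (n₀ y) (n₀ y)) / ‖x - y‖ * ρ k ‖x - y‖) := by
    intro k
    refine fubini_le μ (volume.restrict Ω) (fun e x y => ENNReal.ofReal
      (‖lift0 e (n₀ x) - lift0 e (n₀ y)‖ / ‖x - y‖ * ρ k ‖x - y‖)) _ _ ENNReal.ofReal_ne_top
      (hm3 k) ?_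
    intro x y
    rcases eq_or_ne x y with rfl | hxy
    · simp
    have hr : 0 < ‖x - y‖ := norm_pos_iff.2 (sub_ne_zero.2 hxy)
    have hw : 0 ≤ ρ k ‖x - y‖ / ‖x - y‖ := div_nonneg (hρnonneg k _ hr) hr.le
    have hre : ∀ A : ℝ, 0 ≤ A → ENNReal.ofReal (A / ‖x - y‖ * ρ k ‖x - y‖) =
        ENNReal.ofReal A * ENNReal.ofReal (ρ k ‖x - y‖ / ‖x - y‖) := by
      intro A hA
      rw [← ENNReal.ofReal_mul hA]; congr 1; ring
    rw [frob_eq _ _ (hn₀sph x) (hn₀sph y), hre _ (sqrt_nonneg _)]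
    simp_rw [hre _ (norm_nonneg _)]
    rw [lintegral_mul_const' _ _ ENNReal.ofReal_ne_top, ← mul_assoc,
      ← ENNReal.ofReal_mul (by positivity)]
    gcongr
    exact expect μ hinv hnull _ _ (hn₀sph x) (hn₀sph y)
  obtain ⟨e, he⟩ := exists_le_lintegral (μ := μ) (f := fun e => liminf (fun k => F k e) atTop)
    (Measurable.liminf hFm).aemeasurable
  refine ⟨fun x => lift0 e (n₀ x), measurable_lift0.comp (measurable_const.prodMk hn₀meas),
    fun x => by rw [norm_lift0, hn₀sph], ae_of_all _ fun x => lift0_or _ _, ?_⟩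
  refine he.trans ((lintegral_liminf_le hFm).trans ?_)
  rw [← ENNReal.liminf_const_mul_of_ne_top ENNReal.ofReal_ne_top]
  exact liminf_le_liminf (Eventually.of_forall hmean)
end
end

section
/- Let d ≥ 2. For all n, m ∈ S^{d-1}, setting θ = arccos⟪n, m⟫ ∈ [0, π], it holds ∫_{SO(d)} ‖F(Rn) − F(Rm)‖_{ℝ^d} dμ(R) = ((π−θ)/π)·‖n − m‖ + (θ/π)·‖n + m‖ = (2/π)·( (π−θ)·sin(θ/2) + θ·cos(θ/2) ). -/
noncomputable section
open MeasureTheory Real Filter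
open scoped ENNReal RealInnerProductSpace

instance {m n : Type*} : MeasurableSpace (Matrix m n ℝ) := MeasurableSpace.pi

/-- The special orthogonal group `SO(d)` as matrices. -/
abbrev SOd (d : ℕ) := Matrix.specialOrthogonalGroup (Fin d) ℝ

/-- The last coordinate `⟪x, e_d⟫` of a vector `x ∈ ℝ^d`. -/
def lastCoord {d : ℕ} (x : EuclideanSpace ℝ (Fin d)) : ℝ :=
  if h : 0 < d then x ⟨d - 1, Nat.sub_lt h Nat.one_pos⟩ else 0

/-- `F : S^{d-1} → S^{d-1}`, `F(x) = x` if `⟪x, e_d⟫ ≥ 0` and `F(x) = -x` otherwise. -/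
def Fsym {d : ℕ} (x : EuclideanSpace ℝ (Fin d)) : EuclideanSpace ℝ (Fin d)  :=
  if 0 ≤ lastCoord x then x else -x

/-- Action of a matrix on `ℝ^d` (Euclidean space) by matrix-vector multiplication. -/
def rotAct {d : ℕ} (R : Matrix (Fin d) (Fin d) ℝ) (x : EuclideanSpace ℝ (Fin d)) :
    EuclideanSpace ℝ (Fin d) :=
  (EuclideanSpace.equiv (Fin d) ℝ).symm (R.mulVec (EuclideanSpace.equiv (Fin d) ℝ x))

/-- Action of `R ∈ SO(d)` on `ℝ^d`. -/
def rot {d : ℕ} (R : SOd d) (x : EuclideanSpace ℝ (Fin d)) : EuclideanSpace ℝ (Fin d) :=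
  rotAct (R : Matrix (Fin d) (Fin d) ℝ) x

/-!
STATEMENT 6: the Euclidean average-distance formula from the proof of Theorem 4.1:
∫ ‖F(Rn) − F(Rm)‖ dμ(R) = ((π−θ)/π)‖n−m‖ + (θ/π)‖n+m‖ = (2/π)((π−θ)sin(θ/2) + θcos(θ/2)).
-/


open Matrix in
def rotM {d : ℕ} (u w : Fin d → ℝ) (φ : ℝ) : Matrix (Fin d) (Fin d) ℝ :=
  1 + (Real.cos φ - 1) • (vecMulVec u u + vecMulVec w w) +
    Real.sin φ • (vecMulVec w u - vecMulVec u w)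

open Matrix in
lemma rotM_mul {d : ℕ} (u w : Fin d → ℝ) (hu : u ⬝ᵥ u = 1) (hw : w ⬝ᵥ w = 1)
    (huw : u ⬝ᵥ w = 0) (a b : ℝ) : rotM u w a * rotM u w b = rotM u w (a + b) := by
  have hwu : w ⬝ᵥ u = 0 := by rw [dotProduct_comm]; exact huw
  unfold rotM
  rw [Real.cos_add, Real.sin_add]
  simp only [mul_add, add_mul, mul_sub, sub_mul, Matrix.smul_mul, Matrix.mul_smul, vecMulVec_mul_vecMulVec, hu, hw,
    huw, hwu, one_mul, mul_one, zero_smul, one_smul, vecMulVec_zero]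
  module

open Matrix in
lemma rotM_transpose {d : ℕ} (u w : Fin d → ℝ) (a : ℝ) :
    (rotM u w a)ᵀ = rotM u w (-a) := by
  unfold rotM
  simp only [transpose_add, transpose_smul, transpose_sub, transpose_vecMulVec, transpose_one,
    Real.cos_neg, Real.sin_neg]
  module

open Matrix in
lemma rotM_zero {d : ℕ} (u w : Fin d → ℝ) : rotM u w 0 = 1 := by
  simp [rotM]

open Matrix in
lemma rotM_mem {d : ℕ} (u w : Fin d → ℝ) (hu : u ⬝ᵥ u = 1) (hw : w ⬝ᵥ w = 1)
    (huw : u ⬝ᵥ w = 0) (a : ℝ) : rotM u w a ∈ Matrix.specialOrthogonalGroup (Fin d) ℝ := by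
  have h1 : ∀ a, rotM u w a * (rotM u w a)ᵀ = 1 := fun a => by
    rw [rotM_transpose, rotM_mul u w hu hw huw, add_neg_cancel, rotM_zero]
  rw [mem_specialOrthogonalGroup_iff]
  constructor
  · rw [mem_orthogonalGroup_iff]
    exact h1 a
  · have h2 := congrArg det (h1 (a / 2))
    rw [det_mul, det_transpose, ← det_mul, rotM_mul u w hu hw huw, det_one, add_halves] at h2
    exact h2

open Matrix in
lemma rotM_mulVec {d : ℕ} (u w : Fin d → ℝ) (hu : u ⬝ᵥ u = 1) (hw : w ⬝ᵥ w = 1)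
    (huw : u ⬝ᵥ w = 0) (a b : ℝ) :
    rotM u w a *ᵥ (Real.cos b • u + Real.sin b • w) =
      Real.cos (a + b) • u + Real.sin (a + b) • w := by
  have hwu : w ⬝ᵥ u = 0 := by rw [dotProduct_comm]; exact huw
  unfold rotM
  rw [Real.cos_add, Real.sin_add]
  simp only [add_mulVec, sub_mulVec, mulVec_add, mulVec_smul, smul_mulVec, vecMulVec_mulVec, hu, hw, huw, hwu,
    one_mulVec, MulOpposite.op_zero, MulOpposite.op_one, zero_smul, one_smul]
  module

lemma rot_apply {d : ℕ} (R : SOd d) (v : EuclideanSpace ℝ (Fin d)) (i : Fin d) :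
    rot R v i = ∑ j, (R : Matrix (Fin d) (Fin d) ℝ) i j * v j := by
  rfl

lemma rot_add {d : ℕ} (R : SOd d) (v w : EuclideanSpace ℝ (Fin d)) :
    rot R (v + w) = rot R v + rot R w := by
  ext i; simp [rot_apply, mul_add, Finset.sum_add_distrib]

lemma rot_smul {d : ℕ} (R : SOd d) (c : ℝ) (w : EuclideanSpace ℝ (Fin d)) :
    rot R (c • w) = c • rot R w := by
  ext i; simp [rot_apply, Finset.mul_sum, mul_left_comm]

lemma rot_sub {d : ℕ} (R : SOd d) (v w : EuclideanSpace ℝ (Fin d)) :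
    rot R (v - w) = rot R v - rot R w := by
  ext i; simp [rot_apply, mul_sub, Finset.sum_sub_distrib]

lemma rot_mul {d : ℕ} (R S : SOd d) (v : EuclideanSpace ℝ (Fin d)) :
    rot (R * S) v = rot R (rot S v) := by
  have h : (R * S : SOd d).1.mulVec v.ofLp = R.1.mulVec (S.1.mulVec v.ofLp) := by
    simp
  ext i
  exact congrFun h i

open Matrix in
lemma norm_rot {d : ℕ} (R : SOd d) (v : EuclideanSpace ℝ (Fin d)) : ‖rot R v‖ = ‖v‖ := by
  have h : (R : Matrix (Fin d) (Fin d) ℝ)ᵀ * (R : Matrix (Fin d) (Fin d) ℝ) = 1 :=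
    (mem_orthogonalGroup_iff' (Fin d) ℝ).1 (mem_specialOrthogonalGroup_iff.1 R.2).1
  have h2 : ∀ x : EuclideanSpace ℝ (Fin d), ‖x‖ ^ 2 = x.ofLp ⬝ᵥ x.ofLp := fun x => by
    rw [EuclideanSpace.real_norm_sq_eq]; simp [dotProduct, sq]
  have h3 : ‖rot R v‖ ^ 2 = ‖v‖ ^ 2 := by
    rw [h2, h2]
    change ((R : Matrix (Fin d) (Fin d) ℝ) *ᵥ v.ofLp) ⬝ᵥ ((R : Matrix (Fin d) (Fin d) ℝ) *ᵥ v.ofLp) = _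
    rw [dotProduct_mulVec, ← mulVec_transpose, mulVec_mulVec, h, one_mulVec]
  exact (sq_eq_sq₀ (norm_nonneg _) (norm_nonneg _)).1 h3

/-- The last coordinate of `R v`. -/
def XX {d : ℕ} (R : SOd d) (v : EuclideanSpace ℝ (Fin d)) : ℝ := lastCoord (rot R v)

lemma XX_eq {d : ℕ} (hd : 0 < d) (R : SOd d) (v : EuclideanSpace ℝ (Fin d)) :
    XX R v = ∑ j, (R : Matrix (Fin d) (Fin d) ℝ) ⟨d - 1, Nat.sub_lt hd Nat.one_pos⟩ j * v j := by
  unfold XX lastCoord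
  rw [dif_pos hd, rot_apply]

lemma measurable_entry {d : ℕ} (i j : Fin d) :
    Measurable (fun R : SOd d => (R : Matrix (Fin d) (Fin d) ℝ) i j) := by
  have h : Measurable (fun R : Matrix (Fin d) (Fin d) ℝ => R i j) :=
    (measurable_pi_apply j).comp (measurable_pi_apply i)
  exact h.comp measurable_subtype_coe

lemma measurable_XX {d : ℕ} (hd : 0 < d) (v : EuclideanSpace ℝ (Fin d)) :
    Measurable (fun R : SOd d => XX R v) := by
  simp only [XX_eq hd]
  exact Finset.measurable_sum _ fun j _ => (measurable_entry _ j).mul_const _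

lemma measurable_XX2 {d : ℕ} (hd : 0 < d) :
    Measurable (fun p : SOd d × EuclideanSpace ℝ (Fin d) => XX p.1 p.2) := by
  simp only [XX_eq hd]
  refine Finset.measurable_sum _ fun j _ => ((measurable_entry _ j).comp measurable_fst).mul ?_
  have : Measurable (fun v : EuclideanSpace ℝ (Fin d) => v j) := by fun_prop
  exact this.comp measurable_snd

lemma measurable_mulRight {d : ℕ} (S : SOd d) : Measurable (fun R : SOd d => R * S) := by
  refine Measurable.subtype_mk ?_
  refine measurable_pi_lambda _ fun i => measurable_pi_lambda _ fun j => ?_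
  have : (fun R : SOd d => ((R : Matrix (Fin d) (Fin d) ℝ) * (S : Matrix (Fin d) (Fin d) ℝ)) i j) =
    fun R : SOd d => ∑ k, (R : Matrix (Fin d) (Fin d) ℝ) i k * (S : Matrix (Fin d) (Fin d) ℝ) k j := by
    ext R; rw [Matrix.mul_apply]
  exact this ▸ Finset.measurable_sum _ fun k _ => (measurable_entry i k).mul_const _

lemma exists_unit_orth {d : ℕ} (hd : 2 ≤ d) (n : EuclideanSpace ℝ (Fin d)) :
    ∃ w : EuclideanSpace ℝ (Fin d), ‖w‖ = 1 ∧ ⟪n, w⟫ = 0 := by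
  have h : (ℝ ∙ n)ᗮ ≠ ⊥ := by
    intro h
    rw [Submodule.orthogonal_eq_bot_iff] at h
    have h1 := finrank_span_le_card (R := ℝ) ({n} : Set (EuclideanSpace ℝ (Fin d)))
    rw [h] at h1
    simp at h1
    omega
  obtain ⟨x, hx, hx0⟩ := Submodule.exists_mem_ne_zero_of_ne_bot h
  refine ⟨‖x‖⁻¹ • x, ?_, ?_⟩
  · rw [norm_smul, norm_inv, norm_norm, inv_mul_cancel₀ (norm_ne_zero_iff.2 hx0)]
  · rw [inner_smul_right, Submodule.mem_orthogonal_singleton_iff_inner_right.1 hx, mul_zero]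

lemma exists_decomp {d : ℕ} (hd : 2 ≤ d) (n m : EuclideanSpace ℝ (Fin d)) (hn : ‖n‖ = 1)
    (hm : ‖m‖ = 1) : ∃ w : EuclideanSpace ℝ (Fin d), ‖w‖ = 1 ∧ ⟪n, w⟫ = 0 ∧
      m = Real.cos (Real.arccos ⟪n, m⟫) • n + Real.sin (Real.arccos ⟪n, m⟫) • w := by
  have hb := abs_le.1 (abs_real_inner_le_norm n m)
  rw [hn, hm, mul_one] at hb
  rw [Real.cos_arccos hb.1 hb.2, Real.sin_arccos]
  set c := ⟪n, m⟫ with hc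
  have hz : ‖m - c • n‖ = √(1 - c ^ 2) := by
    rw [← Real.sqrt_sq (norm_nonneg (m - c • n)), norm_sub_sq_real, norm_smul, inner_smul_right,
      real_inner_comm, ← hc, hn, hm]
    congr 1
    rw [Real.norm_eq_abs, mul_one, sq_abs]; ring
  by_cases h0 : m - c • n = 0
  · obtain ⟨w, hw, hw'⟩ := exists_unit_orth hd n
    refine ⟨w, hw, hw', ?_⟩
    rw [← hz, h0, norm_zero, zero_smul, add_zero]
    exact sub_eq_zero.1 h0
  · refine ⟨‖m - c • n‖⁻¹ • (m - c • n), ?_, ?_, ?_⟩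
    · rw [norm_smul, norm_inv, norm_norm, inv_mul_cancel₀ (norm_ne_zero_iff.2 h0)]
    · rw [inner_smul_right, inner_sub_right, inner_smul_right, real_inner_self_eq_norm_sq, hn, ← hc]
      simp
    · rw [← hz, smul_smul, mul_inv_cancel₀ (norm_ne_zero_iff.2 h0), one_smul]
      abel

lemma exists_rotation {d : ℕ} (n w : EuclideanSpace ℝ (Fin d)) (hn : ‖n‖ = 1)
    (hw : ‖w‖ = 1) (hnw : ⟪n, w⟫ = 0) (a : ℝ) : ∃ S : SOd d, ∀ b,
      rot S (Real.cos b • n + Real.sin b • w) = Real.cos (a + b) • n + Real.sin (a + b) • w := by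
  have h2 : ∀ x y : EuclideanSpace ℝ (Fin d), dotProduct x.ofLp y.ofLp = ⟪x, y⟫ := fun x y => by
    rw [real_inner_comm]; simp [PiLp.inner_apply, dotProduct]
  have h3 : ∀ x : EuclideanSpace ℝ (Fin d), ‖x‖ = 1 → dotProduct x.ofLp x.ofLp = 1 := fun x hx => by
    rw [h2, real_inner_self_eq_norm_sq, hx]; norm_num
  have hnw' : dotProduct n.ofLp w.ofLp = 0 := by rw [h2, hnw]
  refine ⟨⟨rotM n.ofLp w.ofLp a, rotM_mem _ _ (h3 n hn) (h3 w hw) hnw' a⟩, fun b => ?_⟩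
  have := rotM_mulVec _ _ (h3 n hn) (h3 w hw) hnw' a b
  ext i
  exact congrFun this i

lemma XX_comb {d : ℕ} (hd : 0 < d) (R : SOd d) (v w : EuclideanSpace ℝ (Fin d)) (a b : ℝ) :
    XX R (a • v + b • w) = a * XX R v + b * XX R w := by
  simp only [XX_eq hd, Finset.mul_sum, ← Finset.sum_add_distrib]
  refine Finset.sum_congr rfl fun j _ => ?_
  simp; ring

lemma null_XX {d : ℕ} (hd : 2 ≤ d) (μ : Measure (SOd d)) [IsProbabilityMeasure μ]
    (hμright : ∀ R₀ : SOd d, μ.map (fun R => R * R₀) = μ)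
    (n : EuclideanSpace ℝ (Fin d)) (hn : ‖n‖ = 1) : μ {R | XX R n = 0} = 0 := by
  have hd0 : 0 < d := by omega
  have hms : MeasurableSet {p : SOd d × EuclideanSpace ℝ (Fin d) | XX p.1 p.2 = 0} :=
    measurable_XX2 hd0 (measurableSet_singleton 0)
  have h0 : (μ.prod volume) {p : SOd d × EuclideanSpace ℝ (Fin d) | XX p.1 p.2 = 0} = 0 := by
    rw [Measure.measure_prod_null hms]
    refine Filter.Eventually.of_forall fun R => ?_
    let L : EuclideanSpace ℝ (Fin d) →ₗ[ℝ] ℝ :=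
      { toFun := fun v => XX R v
        map_add' := fun v w => by simpa using XX_comb hd0 R v w 1 1
        map_smul' := fun c v => by simpa using XX_comb hd0 R v 0 c 0 }
    have hL : LinearMap.ker L ≠ ⊤ := by
      intro h
      rw [LinearMap.ker_eq_top] at h
      let i : Fin d := ⟨d - 1, Nat.sub_lt hd0 Nat.one_pos⟩
      have hz : ∀ j, (R : Matrix (Fin d) (Fin d) ℝ) i j = 0 := fun j => by
        have h1 : L (EuclideanSpace.single j 1) = 0 := by rw [h]; rfl
        change XX R _ = 0 at h1
        rw [XX_eq hd0] at h1
        simpa [Pi.single_apply] using h1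
      have h2 := (Matrix.mem_orthogonalGroup_iff (Fin d) ℝ).1 (Matrix.mem_specialOrthogonalGroup_iff.1 R.2).1
      have h3 := congrFun (congrFun h2 i) i
      rw [Matrix.mul_apply] at h3
      simp [hz] at h3
    exact Measure.addHaar_submodule volume (LinearMap.ker L) hL
  have h0' : ((volume : Measure (EuclideanSpace ℝ (Fin d))).prod μ) {p | XX p.2 p.1 = 0} = 0 := by
    rw [← Measure.prod_swap, Measure.map_apply measurable_swap
      (show MeasurableSet {p : EuclideanSpace ℝ (Fin d) × SOd d | XX p.2 p.1 = 0} from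
        measurable_swap hms)]
    exact h0
  have h1 := Measure.measure_ae_null_of_prod_null h0'
  have h2 : ∀ᵐ v : EuclideanSpace ℝ (Fin d), v ≠ 0 := by
    have : Nonempty (Fin d) := ⟨⟨0, hd0⟩⟩
    have : Nontrivial (EuclideanSpace ℝ (Fin d)) := by infer_instance
    simp [ae_iff]
  obtain ⟨v, hv, hv0⟩ := (h1.and h2).exists
  have hv1 : μ {R | XX R v = 0} = 0 := hv
  set v' := ‖v‖⁻¹ • v with hv'
  have hvn : ‖v'‖ = 1 := by
    rw [norm_smul, norm_inv, norm_norm, inv_mul_cancel₀ (norm_ne_zero_iff.2 hv0)]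
  obtain ⟨w, hw, hnw, hdec⟩ := exists_decomp hd n v' hn hvn
  obtain ⟨S, hS⟩ := exists_rotation n w hn hw hnw (Real.arccos ⟪n, v'⟫)
  have hS0 : rot S n = v' := by
    have := hS 0
    simp only [Real.cos_zero, Real.sin_zero, one_smul, zero_smul, add_zero] at this
    rw [this]; exact hdec.symm
  rw [← hμright S, Measure.map_apply (measurable_mulRight S)
    (show MeasurableSet {R | XX R n = 0} from measurable_XX hd0 n (measurableSet_singleton 0))]
  convert hv1 using 2
  ext R
  simp only [Set.mem_preimage, Set.mem_ofPred_eq]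
  rw [XX, rot_mul, hS0, hv', rot_smul]
  have := XX_comb hd0 R v 0 ‖v‖⁻¹ 0
  simp only [zero_smul, add_zero, zero_mul, XX, rot_smul] at this
  simp [XX, this, hv0]

lemma measurableSet_cosD (θ : ℝ) : MeasurableSet {ψ : ℝ | Real.cos ψ * Real.cos (ψ + θ) < 0} := by
  apply measurableSet_lt <;> fun_prop

lemma circle_measure (θ : ℝ) (h0 : 0 ≤ θ) (h1 : θ ≤ π) (α : ℝ) :
    (volume.restrict (Set.Ioc 0 π)) {φ : ℝ | Real.cos (φ - α) * Real.cos (φ - α + θ) < 0} =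
      ENNReal.ofReal θ := by
  set D := {ψ : ℝ | Real.cos ψ * Real.cos (ψ + θ) < 0} with hD
  have hDm : MeasurableSet D := measurableSet_cosD θ
  set g : ℝ → ℝ := D.indicator 1 with hg
  have hper : Function.Periodic g π := by
    intro x
    have : x + π ∈ D ↔ x ∈ D := by
      simp only [hD, Set.mem_ofPred_eq]
      rw [show x + π + θ = (x + θ) + π by ring, Real.cos_add_pi, Real.cos_add_pi, neg_mul_neg]
    simp only [hg, Set.indicator_apply, this, Pi.one_apply]
  have hset : MeasurableSet {φ : ℝ | Real.cos (φ - α) * Real.cos (φ - α + θ) < 0} :=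
    (measurable_id.sub_const α) hDm
  have e1 : (volume.restrict (Set.Ioc 0 π)).real
      {φ : ℝ | Real.cos (φ - α) * Real.cos (φ - α + θ) < 0} = ∫ φ in (0:ℝ)..π, g (φ - α) := by
    rw [intervalIntegral.integral_of_le Real.pi_pos.le, ← integral_indicator_one hset]
    rfl
  have e2 : ∫ φ in (0:ℝ)..π, g (φ - α) = ∫ φ in (-(π/2))..(π/2), g φ := by
    rw [intervalIntegral.integral_comp_sub_right]
    have := hper.intervalIntegral_add_eq (0 - α) (-(π/2))
    rw [show 0 - α + π = π - α by ring, show -(π/2) + π = π/2 by ring] at this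
    exact this
  have e3 : ∫ φ in (-(π/2))..(π/2), g φ = θ := by
    have hp := Real.pi_pos
    rw [intervalIntegral.integral_of_le (by linarith), integral_indicator_one hDm,
      measureReal_def, Measure.restrict_apply hDm]
    have : D ∩ Set.Ioc (-(π/2)) (π/2) = Set.Ioo (π/2 - θ) (π/2) := by
      ext x
      simp only [hD, Set.mem_inter_iff, Set.mem_ofPred_eq, Set.mem_Ioc, Set.mem_Ioo]
      constructor
      · rintro ⟨hx, hx1, hx2⟩
        have hx3 : x < π/2 := by
          refine lt_of_le_of_ne hx2 ?_
          rintro rfl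
          simp at hx
        refine ⟨?_, hx3⟩
        by_contra hcon
        have c1 := Real.cos_nonneg_of_mem_Icc ⟨hx1.le, hx2⟩
        have c2 := Real.cos_nonneg_of_mem_Icc (x := x + θ) ⟨by linarith, by linarith⟩
        exact absurd hx (not_lt.2 (mul_nonneg c1 c2))
      · rintro ⟨hx1, hx2⟩
        have hx3 : -(π/2) < x := by linarith
        refine ⟨?_, hx3, hx2.le⟩
        have c1 := Real.cos_pos_of_mem_Ioo ⟨hx3, hx2⟩
        have c2 := Real.cos_neg_of_pi_div_two_lt_of_lt (x := x + θ) (by linarith) (by linarith)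
        exact mul_neg_of_pos_of_neg c1 c2
    rw [this, Real.volume_Ioo, ENNReal.toReal_ofReal (by linarith)]
    ring
  have e4 := e1.trans (e2.trans e3)
  rw [← ofReal_measureReal, e4]

lemma circle_measure' (θ : ℝ) (h0 : 0 ≤ θ) (h1 : θ ≤ π) (a b : ℝ) (ha : a ≠ 0) :
    (volume.restrict (Set.Ioc 0 π)) {φ : ℝ | (Real.cos φ * a + Real.sin φ * b) *
      (Real.cos (φ + θ) * a + Real.sin (φ + θ) * b) < 0} = ENNReal.ofReal θ := by
  rw [← circle_measure θ h0 h1 (Complex.arg ⟨a, b⟩)]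
  congr 1
  ext φ
  have hz : (⟨a, b⟩ : ℂ) ≠ 0 := fun h => ha (congrArg Complex.re h)
  have hr : 0 < ‖(⟨a, b⟩ : ℂ)‖ := norm_pos_iff.2 hz
  have hA : a = ‖(⟨a, b⟩ : ℂ)‖ * Real.cos (Complex.arg ⟨a, b⟩) := by
    rw [Complex.norm_mul_cos_arg]
  have hB : b = ‖(⟨a, b⟩ : ℂ)‖ * Real.sin (Complex.arg ⟨a, b⟩) := by
    rw [Complex.norm_mul_sin_arg]
  set r := ‖(⟨a, b⟩ : ℂ)‖
  set α := Complex.arg ⟨a, b⟩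
  have hx : ∀ x, Real.cos x * a + Real.sin x * b = r * Real.cos (x - α) := fun x => by
    rw [hA, hB, Real.cos_sub]; ring
  simp only [Set.mem_ofPred_eq]
  rw [hx, hx, show φ + θ - α = φ - α + θ by ring,
    show r * Real.cos (φ - α) * (r * Real.cos (φ - α + θ)) =
      (r * r) * (Real.cos (φ - α) * Real.cos (φ - α + θ)) by ring]
  constructor
  · intro h; by_contra hc
    exact absurd h (not_lt.2 (mul_nonneg (by positivity) (not_lt.1 hc)))
  · intro h
    exact mul_neg_of_pos_of_neg (by positivity) h

lemma measure_D {d : ℕ} (hd : 2 ≤ d) (μ : Measure (SOd d)) [IsProbabilityMeasure μ]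
    (hμright : ∀ R₀ : SOd d, μ.map (fun R => R * R₀) = μ)
    (n m : EuclideanSpace ℝ (Fin d)) (hn : ‖n‖ = 1) (hm : ‖m‖ = 1) :
    μ {R | XX R n * XX R m < 0} = ENNReal.ofReal (Real.arccos ⟪n, m⟫ / π) := by
  have hd0 : 0 < d := by omega
  obtain ⟨w, hw, hnw, hdec⟩ := exists_decomp hd n m hn hm
  set θ := Real.arccos ⟪n, m⟫ with hθ
  have hθ0 : 0 ≤ θ := Real.arccos_nonneg _
  have hθ1 : θ ≤ π := Real.arccos_le_pi _
  set ν := volume.restrict (Set.Ioc (0:ℝ) π) with hν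
  let E : Set (SOd d × ℝ) := {p | (Real.cos p.2 * XX p.1 n + Real.sin p.2 * XX p.1 w) *
      (Real.cos (p.2 + θ) * XX p.1 n + Real.sin (p.2 + θ) * XX p.1 w) < 0}
  have hX : ∀ v, Measurable (fun p : SOd d × ℝ => XX p.1 v) := fun v =>
    (measurable_XX hd0 v).comp measurable_fst
  have hE : MeasurableSet E := by
    have := hX n
    have := hX w
    apply measurableSet_lt <;> fun_prop
  have hDm : MeasurableSet {R | XX R n * XX R m < 0} :=
    measurableSet_lt ((measurable_XX hd0 n).mul (measurable_XX hd0 m)) measurable_const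
  have k1 : (μ.prod ν) E = ENNReal.ofReal θ := by
    rw [Measure.prod_apply hE]
    have : ∀ᵐ R ∂μ, ν (Prod.mk R ⁻¹' E) = ENNReal.ofReal θ := by
      have hz : ∀ᵐ R ∂μ, XX R n ≠ 0 := by
        rw [ae_iff]; simpa using null_XX hd μ hμright n hn
      filter_upwards [hz] with R hR
      exact circle_measure' θ hθ0 hθ1 (XX R n) (XX R w) hR
    rw [lintegral_congr_ae this]
    simp
  have k2 : (μ.prod ν) E = μ {R | XX R n * XX R m < 0} * ENNReal.ofReal π := by
    rw [Measure.prod_apply_symm hE]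
    have : ∀ φ, μ ((fun R => (R, φ)) ⁻¹' E) = μ {R | XX R n * XX R m < 0} := by
      intro φ
      obtain ⟨S, hS⟩ := exists_rotation n w hn hw hnw φ
      have s0 := hS 0
      have s1 := hS θ
      simp only [Real.cos_zero, Real.sin_zero, one_smul, zero_smul, add_zero] at s0
      rw [← hdec] at s1
      conv_rhs => rw [← hμright S, Measure.map_apply (measurable_mulRight S) hDm]
      congr 1
      ext R
      simp only [Set.mem_preimage, Set.mem_ofPred_eq, E]
      rw [← XX_comb hd0, ← XX_comb hd0, ← s0, ← s1]
      simp only [XX, rot_mul]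
    simp only [this, lintegral_const, hν]
    simp
  have hπ := Real.pi_pos
  rw [ENNReal.ofReal_div_of_pos hπ, ← k1, k2]
  rw [ENNReal.mul_div_cancel_right]
  · simpa using hπ
  · exact ENNReal.ofReal_ne_top

lemma Fsym_dist {d : ℕ} (R : SOd d) (n m : EuclideanSpace ℝ (Fin d)) (h1 : XX R n ≠ 0)
    (h2 : XX R m ≠ 0) : ‖Fsym (rot R n) - Fsym (rot R m)‖ =
      if XX R n * XX R m < 0 then ‖n + m‖ else ‖n - m‖ := by
  rw [← norm_rot R (n + m), ← norm_rot R (n - m), rot_add, rot_sub]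
  unfold Fsym
  change ‖(if 0 ≤ XX R n then _ else _) - (if 0 ≤ XX R m then _ else _)‖ = _
  rcases lt_or_gt_of_ne h1 with a | a <;> rcases lt_or_gt_of_ne h2 with b | b
  · rw [if_neg (not_le.2 a), if_neg (not_le.2 b), if_neg (not_lt.2 (mul_pos_of_neg_of_neg a b).le),
      neg_sub_neg, norm_sub_rev]
  · rw [if_neg (not_le.2 a), if_pos b.le, if_pos (mul_neg_of_neg_of_pos a b), ← norm_neg]
    congr 1; abel
  · rw [if_pos a.le, if_neg (not_le.2 b), if_pos (mul_neg_of_pos_of_neg a b), sub_neg_eq_add]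
  · rw [if_pos a.le, if_pos b.le, if_neg (not_lt.2 (mul_pos a b).le)]

theorem average_euclidean_distance
    (d : ℕ) (hd : 2 ≤ d)
    (μ : Measure (SOd d)) [IsProbabilityMeasure μ]
    (hμleft : ∀ R₀ : SOd d, μ.map (fun R => R₀ * R) = μ)
    (hμright : ∀ R₀ : SOd d, μ.map (fun R => R * R₀) = μ)
    (n m : EuclideanSpace ℝ (Fin d)) (hn : ‖n‖ = 1) (hm : ‖m‖ = 1) :
    (∫⁻ R, ENNReal.ofReal ‖Fsym (rot R n) - Fsym (rot R m)‖ ∂μ =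
      ENNReal.ofReal ((π - Real.arccos ⟪n, m⟫) / π * ‖n - m‖ +
        Real.arccos ⟪n, m⟫ / π * ‖n + m‖)) ∧
    (π - Real.arccos ⟪n, m⟫) / π * ‖n - m‖ + Real.arccos ⟪n, m⟫ / π * ‖n + m‖ =
      2 / π * ((π - Real.arccos ⟪n, m⟫) * Real.sin (Real.arccos ⟪n, m⟫ / 2) +
        Real.arccos ⟪n, m⟫ * Real.cos (Real.arccos ⟪n, m⟫ / 2)) := by
  have hd0 : 0 < d := by omega
  have hπ := Real.pi_pos
  have hD := measure_D hd μ hμright n m hn hm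
  have hb := abs_le.1 (abs_real_inner_le_norm n m)
  rw [hn, hm, mul_one] at hb
  have hcos : Real.cos (Real.arccos ⟪n, m⟫) = ⟪n, m⟫ := Real.cos_arccos hb.1 hb.2
  have hθ0 : 0 ≤ Real.arccos ⟪n, m⟫ := Real.arccos_nonneg _
  have hθ1 : Real.arccos ⟪n, m⟫ ≤ π := Real.arccos_le_pi _
  have hsub : ‖n - m‖ ^ 2 = 2 - 2 * ⟪n, m⟫ := by
    rw [norm_sub_sq_real, hn, hm]; ring
  have hadd : ‖n + m‖ ^ 2 = 2 + 2 * ⟪n, m⟫ := by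
    rw [norm_add_sq_real, hn, hm]; ring
  set θ := Real.arccos ⟪n, m⟫ with hθ
  constructor
  · have hDm : MeasurableSet {R | XX R n * XX R m < 0} :=
      measurableSet_lt ((measurable_XX hd0 n).mul (measurable_XX hd0 m)) measurable_const
    have hz : ∀ v : EuclideanSpace ℝ (Fin d), ‖v‖ = 1 → ∀ᵐ R ∂μ, XX R v ≠ 0 := fun v hv => by
      rw [ae_iff]; simpa using null_XX hd μ hμright v hv
    have key : ∀ᵐ R ∂μ, ENNReal.ofReal ‖Fsym (rot R n) - Fsym (rot R m)‖ =
        {R | XX R n * XX R m < 0}.indicator (fun _ => ENNReal.ofReal ‖n + m‖) R +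
        {R | XX R n * XX R m < 0}ᶜ.indicator (fun _ => ENNReal.ofReal ‖n - m‖) R := by
      filter_upwards [hz n hn, hz m hm] with R h1 h2
      rw [Fsym_dist R n m h1 h2]
      by_cases h : XX R n * XX R m < 0 <;> simp [h]
    rw [lintegral_congr_ae key, lintegral_add_left (measurable_const.indicator hDm),
      lintegral_indicator_const hDm, lintegral_indicator_const hDm.compl,
      prob_compl_eq_one_sub hDm, hD, ← ENNReal.ofReal_one, ← ENNReal.ofReal_sub _ (by positivity),
      ← ENNReal.ofReal_mul (norm_nonneg _), ← ENNReal.ofReal_mul (norm_nonneg _),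
      ← ENNReal.ofReal_add (by positivity)]
    · congr 1
      field_simp
      ring
    · refine mul_nonneg (norm_nonneg _) (sub_nonneg.2 ?_)
      rw [div_le_one hπ]; exact hθ1
  · have hc2 : Real.cos θ = 2 * Real.cos (θ / 2) ^ 2 - 1 := by
      rw [← Real.cos_two_mul]; congr 1; ring
    have hs2 := Real.sin_sq_add_cos_sq (θ / 2)
    have hs : 0 ≤ Real.sin (θ / 2) := Real.sin_nonneg_of_nonneg_of_le_pi (by linarith) (by linarith)
    have hc : 0 ≤ Real.cos (θ / 2) := Real.cos_nonneg_of_mem_Icc ⟨by linarith, by linarith⟩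
    have e1 : ‖n - m‖ = 2 * Real.sin (θ / 2) := by
      refine (sq_eq_sq₀ (norm_nonneg _) (by positivity)).1 ?_
      rw [hsub, ← hcos, hc2]; linarith
    have e2 : ‖n + m‖ = 2 * Real.cos (θ / 2) := by
      refine (sq_eq_sq₀ (norm_nonneg _) (by positivity)).1 ?_
      rw [hadd, ← hcos, hc2]; ring
    rw [e1, e2]
    field_simp
end
end
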